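/- Fix integers 0 ≤ d₀ < d and a real number T ≥ 0. Let Γ be a family of continuously differentiable functions Γᵏᵢⱼ : ℝ × ℝᵈ → ℝ (indices i, j, k ∈ {1,…,d}) with Γᵏᵢⱼ = Γᵏⱼᵢ, and suppose that Γᵏᵢⱼ(s, x) = 0 whenever i, j ≤ d₀, k > d₀, s ∈ [0, T] and x̂ = 0. Then there exist an open neighbourhood V of the origin in ℝᵈ and a smooth nonnegative function f : ℝᵈ → ℝ such that: (i) for every x ∈ V one has f(x) = 0 if and only if x̂ = 0; and (ii) for every s ∈ [0, T] and every x ∈ V the symmetric d×d matrix H(s,x) with entries H_{ij}(s,x) = (∂²f/∂x_i∂x_j)(x) − Σ_{k=1}^{d} Γᵏᵢⱼ(s,x) (∂f/∂x_k)(x) is positive semidefinite. -/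

import Mathlib

open scoped BigOperators

/-!
The idea is to use `f = ½ (ε² + ‖y‖²) ‖z‖²`, where `y` and `z` are the components of `x` along the
totally geodesic subspace `K` and orthogonal to it. If `v` has components `u` and `w`, the flat
Hessian of `f` at `x` is `‖z‖² ‖u‖² + (ε² + ‖y‖²) ‖w‖² + 4 ⟪y, u⟫ ⟪z, w⟫`; the first term, which
gives positivity along `K`, comes from the summand `‖y‖²` of the weight. Since the `Kᗮ`-component of
`Γ(u, u)` vanishes on `K`, it is `O(‖z‖ ‖u‖²)`, so the Christoffel correction is dominated by this
form when `x` is small compared to `ε`, and `ε` is small compared to the inverse of the size and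
Lipschitz constant of `Γ`.
-/

open Set Submodule
open scoped ContDiff InnerProductSpace NNReal

section ConnectionHessian

variable {E : Type*} [NormedAddCommGroup E] [NormedSpace ℝ E]

/-- The Hessian `Hess^∇ f (x)` with respect to the connection `∇` on a vector space whose
Christoffel symbols at `x` are the bilinear map `B`, so that `∇_v w = D_v w + B(v, w)` for the
flat derivative `D`. -/
noncomputable def connectionHessian (f : E → ℝ) (B : E →L[ℝ] E →L[ℝ] E) (x : E) :
    E →L[ℝ] E →L[ℝ] ℝ :=
  fderiv ℝ (fderiv ℝ f) x - (ContinuousLinearMap.compL ℝ E E ℝ (fderiv ℝ f x)).comp B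

theorem connectionHessian_apply (f : E → ℝ) (B : E →L[ℝ] E →L[ℝ] E) (x v w : E) :
    connectionHessian f B x v w = fderiv ℝ (fderiv ℝ f) x v w - fderiv ℝ f x (B v w) :=
  rfl

theorem connectionHessian_comm {f : E → ℝ} {B : E →L[ℝ] E →L[ℝ] E} {x : E} {n : WithTop ℕ∞}
    (hf : ContDiffAt ℝ n f x) (hn : 2 ≤ n) (hB : ∀ v w, B v w = B w v) (v w : E) :
    connectionHessian f B x v w = connectionHessian f B x w v := by
  rw [connectionHessian_apply, connectionHessian_apply, hB v w,
    (hf.isSymmSndFDerivAt (by simpa using hn)).eq v w]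

end ConnectionHessian

section Projection

variable {E : Type*} [NormedAddCommGroup E] [InnerProductSpace ℝ E]
  (K : Submodule ℝ E) [K.HasOrthogonalProjection]

theorem inner_starProjection_starProjection (x v : E) :
    ⟪K.starProjection x, K.starProjection v⟫_ℝ = ⟪K.starProjection x, v⟫_ℝ := by
  rw [← inner_starProjection_left_eq_right,
    starProjection_eq_self_iff.mpr (starProjection_apply_mem K x)]

theorem abs_inner_starProjection_le (x v : E) :
    |⟪K.starProjection x, v⟫_ℝ| ≤ ‖K.starProjection x‖ * ‖K.starProjection v‖ := by
  rw [← inner_starProjection_starProjection]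
  exact abs_real_inner_le_norm _ _

end Projection

section WeightedSqDist

variable {E : Type*} [NormedAddCommGroup E] [InnerProductSpace ℝ E]
  (K : Submodule ℝ E) [K.HasOrthogonalProjection] (ε : ℝ)

/-- Half the squared distance to `K`, weighted by `ε² + ‖y‖²` where `y` is the projection of the
point to `K`. -/
noncomputable def weightedSqDist (x : E) : ℝ :=
  1 / 2 * ((ε ^ 2 + ‖K.starProjection x‖ ^ 2) * ‖Kᗮ.starProjection x‖ ^ 2)

theorem contDiff_weightedSqDist {n : WithTop ℕ∞} : ContDiff ℝ n (weightedSqDist K ε) := by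
  unfold weightedSqDist
  have hK := K.starProjection.contDiff.norm_sq ℝ (n := n)
  have hKperp := Kᗮ.starProjection.contDiff.norm_sq ℝ (n := n)
  fun_prop

theorem weightedSqDist_nonneg (x : E) : 0 ≤ weightedSqDist K ε x := by
  unfold weightedSqDist
  positivity

theorem weightedSqDist_eq_zero_iff {ε : ℝ} (hε : ε ≠ 0) {x : E} :
    weightedSqDist K ε x = 0 ↔ x ∈ K := by
  have hweight : ε ^ 2 + ‖K.starProjection x‖ ^ 2 ≠ 0 := by positivity
  have hdist : Kᗮ.starProjection x = 0 ↔ x ∈ K := by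
    rw [starProjection_apply_eq_zero_iff, orthogonal_orthogonal]
  rw [← hdist]
  simp only [weightedSqDist, mul_eq_zero, one_div, inv_eq_zero, hweight, pow_eq_zero_iff,
    norm_eq_zero, ne_eq, OfNat.ofNat_ne_zero, not_false_eq_true, false_or]

theorem hasFDerivAt_weightedSqDist (x : E) :
    HasFDerivAt (weightedSqDist K ε)
      (innerSL ℝ (‖Kᗮ.starProjection x‖ ^ 2 • K.starProjection x +
        (ε ^ 2 + ‖K.starProjection x‖ ^ 2) • Kᗮ.starProjection x)) x := by
  have hK := (K.starProjection.hasFDerivAt (x := x)).norm_sq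
  have hKperp := (Kᗮ.starProjection.hasFDerivAt (x := x)).norm_sq
  refine (((hK.const_add (ε ^ 2)).mul hKperp).const_mul (1 / 2)).congr_fderiv ?_
  ext v
  simp [-starProjection_orthogonal_val, inner_starProjection_starProjection]
  ring

theorem fderiv_weightedSqDist_apply (x v : E) :
    fderiv ℝ (weightedSqDist K ε) x v =
      ‖Kᗮ.starProjection x‖ ^ 2 * ⟪K.starProjection x, v⟫_ℝ +
        (ε ^ 2 + ‖K.starProjection x‖ ^ 2) * ⟪Kᗮ.starProjection x, v⟫_ℝ := by
  rw [(hasFDerivAt_weightedSqDist K ε x).fderiv, innerSL_apply_apply, inner_add_left,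
    real_inner_smul_left, real_inner_smul_left]

theorem fderiv_fderiv_weightedSqDist_apply (x v w : E) :
    fderiv ℝ (fderiv ℝ (weightedSqDist K ε)) x v w =
      ‖Kᗮ.starProjection x‖ ^ 2 * ⟪K.starProjection v, w⟫_ℝ +
        (ε ^ 2 + ‖K.starProjection x‖ ^ 2) * ⟪Kᗮ.starProjection v, w⟫_ℝ +
        2 * ⟪Kᗮ.starProjection x, v⟫_ℝ * ⟪K.starProjection x, w⟫_ℝ +
        2 * ⟪K.starProjection x, v⟫_ℝ * ⟪Kᗮ.starProjection x, w⟫_ℝ := by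
  have hK := K.starProjection.hasFDerivAt (x := x)
  have hKperp := Kᗮ.starProjection.hasFDerivAt (x := x)
  have hgrad := (hKperp.norm_sq.smul hK).add ((hK.norm_sq.const_add (ε ^ 2)).smul hKperp)
  have hhess := ((innerSL ℝ).hasFDerivAt.comp x hgrad).congr_of_eventuallyEq
    (.of_forall fun y ↦ (hasFDerivAt_weightedSqDist K ε y).fderiv)
  rw [hhess.fderiv, ContinuousLinearMap.comp_apply]
  change ⟪_, w⟫_ℝ = _
  simp [-starProjection_orthogonal_val, inner_starProjection_starProjection, inner_add_left,
    real_inner_smul_left]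
  ring

theorem le_fderiv_fderiv_weightedSqDist_self (x v : E) :
    ‖Kᗮ.starProjection x‖ ^ 2 * ‖K.starProjection v‖ ^ 2 +
        (ε ^ 2 + ‖K.starProjection x‖ ^ 2) * ‖Kᗮ.starProjection v‖ ^ 2 -
        4 * ‖Kᗮ.starProjection x‖ * ‖K.starProjection x‖ *
          ‖K.starProjection v‖ * ‖Kᗮ.starProjection v‖ ≤
      fderiv ℝ (fderiv ℝ (weightedSqDist K ε)) x v v := by
  have hself (L : Submodule ℝ E) [L.HasOrthogonalProjection] :
      ⟪L.starProjection v, v⟫_ℝ = ‖L.starProjection v‖ ^ 2 := by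
    rw [← real_inner_self_eq_norm_sq, inner_starProjection_starProjection]
  have hcross : |⟪Kᗮ.starProjection x, v⟫_ℝ * ⟪K.starProjection x, v⟫_ℝ| ≤
      (‖Kᗮ.starProjection x‖ * ‖Kᗮ.starProjection v‖) *
        (‖K.starProjection x‖ * ‖K.starProjection v‖) := by
    rw [abs_mul]
    gcongr
    exacts [abs_inner_starProjection_le Kᗮ x v, abs_inner_starProjection_le K x v]
  rw [fderiv_fderiv_weightedSqDist_apply, hself K, hself Kᗮ]
  linarith [neg_le_of_abs_le hcross]

theorem fderiv_weightedSqDist_apply_le (x v : E) :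
    fderiv ℝ (weightedSqDist K ε) x v ≤
      ‖Kᗮ.starProjection x‖ ^ 2 * ‖K.starProjection x‖ * ‖v‖ +
        (ε ^ 2 + ‖K.starProjection x‖ ^ 2) * ‖Kᗮ.starProjection x‖ * ‖Kᗮ.starProjection v‖ := by
  have hK := real_inner_le_norm (K.starProjection x) v
  have hKperp := (le_abs_self _).trans (abs_inner_starProjection_le Kᗮ x v)
  rw [fderiv_weightedSqDist_apply, mul_assoc, mul_assoc]
  gcongr

end WeightedSqDist

/-- `X`, `Y`, `a`, `b` stand for the norms of the `z`, `y`, `u`, `w` of the proof idea above. -/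
theorem christoffel_correction_le_quadratic_form {C ε X Y a b : ℝ} (hC : 0 ≤ C) (hε : ε ≤ 1)
    (hCε : C * ε ≤ 1 / 8) (hX₀ : 0 ≤ X) (hX : X ≤ ε / 16) (hY₀ : 0 ≤ Y) (hY : Y ≤ ε / 16)
    (ha : 0 ≤ a) (hb : 0 ≤ b) :
    X ^ 2 * Y * (C * (a ^ 2 + b ^ 2)) +
        (ε ^ 2 + Y ^ 2) * X * (C * X * a ^ 2 + C * (2 * a * b + b ^ 2)) ≤
      X ^ 2 * a ^ 2 + (ε ^ 2 + Y ^ 2) * b ^ 2 - 4 * X * Y * a * b := by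
  obtain ⟨A, hA⟩ : ∃ A, A = ε ^ 2 + Y ^ 2 := ⟨_, rfl⟩
  have hA₀ : 0 ≤ A := by rw [hA]; positivity
  have hA₁ : ε ^ 2 ≤ A := by nlinarith
  have hA₂ : A ≤ 2 * ε ^ 2 := by nlinarith
  have hCA : C * A ≤ ε / 4 := by nlinarith
  have hCX : C * X ≤ 1 / 128 := by nlinarith
  have hCY : C * Y ≤ 1 / 128 := by nlinarith
  have hXY : X * Y ≤ A := by nlinarith
  have haa : C * (Y + A) ≤ 1 / 2 := by linarith
  have hbb : C * X * (X * Y + A) ≤ A / 2 :=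
    calc
      C * X * (X * Y + A) ≤ 1 / 128 * (A + A) :=
        mul_le_mul hCX (by linarith) (by positivity) (by norm_num)
      _ ≤ A / 2 := by linarith
  have hab : 4 * Y + 2 * (C * A) ≤ ε := by linarith
  rw [← hA, ← sub_nonneg]
  calc 0 ≤ (X * a - ε * b) ^ 2 / 2 := by positivity
    _ ≤ 1 / 2 * (X * a) ^ 2 + A / 2 * b ^ 2 - ε * (X * a * b) := by
      linarith [mul_le_mul_of_nonneg_right hA₁ (sq_nonneg b)]
    _ ≤ (1 - C * (Y + A)) * (X * a) ^ 2 + (A - C * X * (X * Y + A)) * b ^ 2 -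
        (4 * Y + 2 * (C * A)) * (X * a * b) := by
      gcongr
      · linarith only [haa]
      · linarith only [hbb]
    _ = _ := by ring

section Positivity

variable {E : Type*} [NormedAddCommGroup E] [InnerProductSpace ℝ E]
  {K : Submodule ℝ E} [K.HasOrthogonalProjection] {B : E →L[ℝ] E →L[ℝ] E} {C δ ε : ℝ}

theorem norm_starProjection_orthogonal_bilin_self_le (hB : ‖B‖ ≤ C)
    (hBK : ∀ u ∈ K, ‖Kᗮ.starProjection (B u u)‖ ≤ δ * ‖u‖ ^ 2) (v : E) :
    ‖Kᗮ.starProjection (B v v)‖ ≤ δ * ‖K.starProjection v‖ ^ 2 +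
      C * (2 * ‖K.starProjection v‖ * ‖Kᗮ.starProjection v‖ + ‖Kᗮ.starProjection v‖ ^ 2) := by
  set u := K.starProjection v with hu
  set w := Kᗮ.starProjection v with hw
  have hbilin (a b : E) : ‖Kᗮ.starProjection (B a b)‖ ≤ C * ‖a‖ * ‖b‖ :=
    (Kᗮ.norm_starProjection_apply_le _).trans <| (B.le_opNorm₂ a b).trans <| by gcongr
  have hsplit : Kᗮ.starProjection (B v v) = Kᗮ.starProjection (B u u) +
      Kᗮ.starProjection (B u w) + Kᗮ.starProjection (B w u) + Kᗮ.starProjection (B w w) := by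
    rw [← starProjection_add_starProjection_orthogonal (K := K) v, ← hu, ← hw]
    simp only [map_add, add_apply]
    abel
  rw [hsplit]
  refine (norm_add₄_le ..).trans ?_
  linarith [hBK u (starProjection_apply_mem K v), hbilin u w, hbilin w u, hbilin w w]

/-- The second hypothesis on `B` says that the second fundamental form of `K` at `x` is bounded by
a multiple of the distance to `K`. -/
theorem connectionHessian_weightedSqDist_self_nonneg {x : E} (hε : ε ≤ 1) (hCε : C * ε ≤ 1 / 8)
    (hx : ‖x‖ ≤ ε / 16) (hB : ‖B‖ ≤ C)
    (hBK : ∀ u ∈ K, ‖Kᗮ.starProjection (B u u)‖ ≤ C * ‖Kᗮ.starProjection x‖ * ‖u‖ ^ 2)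
    (v : E) : 0 ≤ connectionHessian (weightedSqDist K ε) B x v v := by
  have hBvv : ‖B v v‖ ≤ C * (‖K.starProjection v‖ ^ 2 + ‖Kᗮ.starProjection v‖ ^ 2) := by
    rw [← norm_sq_eq_add_norm_sq_starProjection v K, sq, ← mul_assoc]
    exact (B.le_opNorm₂ v v).trans (by gcongr)
  rw [connectionHessian_apply, sub_nonneg]
  calc
    fderiv ℝ (weightedSqDist K ε) x (B v v)
      ≤ ‖Kᗮ.starProjection x‖ ^ 2 * ‖K.starProjection x‖ * ‖B v v‖ +
          (ε ^ 2 + ‖K.starProjection x‖ ^ 2) * ‖Kᗮ.starProjection x‖ *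
            ‖Kᗮ.starProjection (B v v)‖ := fderiv_weightedSqDist_apply_le K ε x _
    _ ≤ ‖Kᗮ.starProjection x‖ ^ 2 * ‖K.starProjection x‖ *
          (C * (‖K.starProjection v‖ ^ 2 + ‖Kᗮ.starProjection v‖ ^ 2)) +
          (ε ^ 2 + ‖K.starProjection x‖ ^ 2) * ‖Kᗮ.starProjection x‖ *
            (C * ‖Kᗮ.starProjection x‖ * ‖K.starProjection v‖ ^ 2 +
              C * (2 * ‖K.starProjection v‖ * ‖Kᗮ.starProjection v‖ +
                ‖Kᗮ.starProjection v‖ ^ 2)) := by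
      gcongr
      exact norm_starProjection_orthogonal_bilin_self_le hB hBK v
    _ ≤ _ := christoffel_correction_le_quadratic_form ((norm_nonneg B).trans hB) hε hCε
      (norm_nonneg _) ((Kᗮ.norm_starProjection_apply_le x).trans hx)
      (norm_nonneg _) ((K.norm_starProjection_apply_le x).trans hx) (norm_nonneg _) (norm_nonneg _)
    _ ≤ _ := le_fderiv_fderiv_weightedSqDist_self K ε x v

theorem norm_starProjection_orthogonal_bilin_self_le_of_lipschitzOnWith {L : ℝ≥0} {U : Set E}
    {G : E → E →L[ℝ] E →L[ℝ] E} (hG : LipschitzOnWith L G U)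
    (hGK : ∀ y ∈ U ∩ K, ∀ u ∈ K, G y u u ∈ K) {x : E} (hx : x ∈ U)
    (hPx : K.starProjection x ∈ U) {u : E} (hu : u ∈ K) :
    ‖Kᗮ.starProjection (G x u u)‖ ≤ L * ‖Kᗮ.starProjection x‖ * ‖u‖ ^ 2 := by
  set y := K.starProjection x
  have hyK : G y u u ∈ K := hGK y ⟨hPx, starProjection_apply_mem K x⟩ u hu
  have hsub : Kᗮ.starProjection (G x u u) = Kᗮ.starProjection ((G x - G y) u u) := by
    have hzero : Kᗮ.starProjection (G y u u) = 0 := by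
      rwa [starProjection_apply_eq_zero_iff, orthogonal_orthogonal]
    rw [sub_apply, sub_apply, map_sub, hzero, sub_zero]
  calc
    ‖Kᗮ.starProjection (G x u u)‖ ≤ ‖(G x - G y) u u‖ := by
      rw [hsub]
      exact norm_starProjection_apply_le _ _
    _ ≤ ‖G x - G y‖ * ‖u‖ * ‖u‖ := (G x - G y).le_opNorm₂ u u
    _ ≤ L * ‖x - y‖ * ‖u‖ * ‖u‖ := by gcongr; exact hG.norm_sub_le hx hPx
    _ = L * ‖Kᗮ.starProjection x‖ * ‖u‖ ^ 2 := by rw [starProjection_orthogonal_val]; ring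

/-- `hK` says that `K` is totally geodesic for the connection with Christoffel maps `Γ (s, ·)`. -/
theorem exists_connectionHessian_self_nonneg [FiniteDimensional ℝ E] {P : Type*}
    [PseudoMetricSpace P] {S : Set P} (hS : IsCompact S) {Γ : P × E → E →L[ℝ] E →L[ℝ] E}
    (hΓ : LocallyLipschitzOn (S ×ˢ univ) Γ)
    (hK : ∀ s ∈ S, ∀ x ∈ K, ∀ u ∈ K, Γ (s, x) u u ∈ K) :
    ∃ ε > 0, ∀ s ∈ S, ∀ x ∈ Metric.ball (0 : E) (ε / 16), ∀ v,
      0 ≤ connectionHessian (weightedSqDist K ε) (Γ (s, x)) x v v := by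
  have hcompact : IsCompact (S ×ˢ Metric.closedBall (0 : E) 1) :=
    hS.prod (isCompact_closedBall _ _)
  have hΓ' : LocallyLipschitzOn (S ×ˢ Metric.closedBall (0 : E) 1) Γ :=
    hΓ.mono (prod_mono_right (subset_univ _))
  obtain ⟨L, hL⟩ := hΓ'.exists_lipschitzOnWith_of_compact hcompact
  obtain ⟨M, hM⟩ := hcompact.exists_bound_of_continuousOn (f := Γ) hΓ'.continuousOn
  obtain ⟨C, hC₁, hLC, hMC⟩ : ∃ C : ℝ, 1 ≤ C ∧ L ≤ C ∧ M ≤ C :=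
    ⟨max 1 (max L M), by simp, by simp, by simp⟩
  have hε : 1 / (8 * C) ≤ 1 := div_le_one_of_le₀ (by linarith) (by positivity)
  refine ⟨1 / (8 * C), by positivity, fun s hs x hx v ↦ ?_⟩
  have hx_norm : ‖x‖ ≤ 1 / (8 * C) / 16 := (mem_ball_zero_iff.mp hx).le
  have hx_one : ‖x‖ ≤ 1 := by linarith
  have hx_mem : x ∈ Metric.closedBall (0 : E) 1 := mem_closedBall_zero_iff.mpr hx_one
  have hPx_mem : K.starProjection x ∈ Metric.closedBall (0 : E) 1 :=
    mem_closedBall_zero_iff.mpr ((K.norm_starProjection_apply_le x).trans hx_one)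
  have hLs : LipschitzOnWith L (fun y ↦ Γ (s, y)) (Metric.closedBall 0 1) := by
    have hcomp := hL.comp (LipschitzWith.prodMk_left s).lipschitzOnWith fun y hy ↦ ⟨hs, hy⟩
    rwa [mul_one] at hcomp
  refine connectionHessian_weightedSqDist_self_nonneg (C := C) hε ?_ hx_norm
    ((hM _ ⟨hs, hx_mem⟩).trans hMC) (fun u hu ↦ ?_) v
  · field_simp
    rfl
  · refine (norm_starProjection_orthogonal_bilin_self_le_of_lipschitzOnWith hLs
      (fun y hy ↦ hK s hs y hy.2) hx_mem hPx_mem hu).trans ?_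
    gcongr

end Positivity

section LocallyLipschitz

variable {α β γ : Type*} [PseudoEMetricSpace α] [PseudoEMetricSpace β] [PseudoEMetricSpace γ]
  {s : Set α}

theorem locallyLipschitzOn_pi {ι : Type*} [Fintype ι] {π : ι → Type*}
    [∀ i, PseudoEMetricSpace (π i)] {f : α → ∀ i, π i}
    (hf : ∀ i, LocallyLipschitzOn s fun x ↦ f x i) : LocallyLipschitzOn s f := by
  intro x hx
  choose L t ht hL using fun i ↦ hf i hx
  refine ⟨Finset.univ.sup L, ⋂ i, t i, Filter.iInter_mem.mpr ht, fun y hy z hz ↦ ?_⟩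
  refine edist_pi_le_iff.mpr fun i ↦ (hL i (mem_iInter.mp hy i) (mem_iInter.mp hz i)).trans ?_
  gcongr
  exact Finset.le_sup (Finset.mem_univ i)

theorem locallyLipschitzOn_comp_of_lipschitzWith {L : ℝ≥0} {g : β → γ} {f : α → β}
    (hg : LipschitzWith L g) (hf : LocallyLipschitzOn s f) : LocallyLipschitzOn s (g ∘ f) := by
  intro x hx
  obtain ⟨M, t, ht, hM⟩ := hf hx
  exact ⟨L * M, t, ht, hg.comp_lipschitzOnWith hM⟩

end LocallyLipschitz

section Coordinates

variable {ι R M : Type*} [CommSemiring R] [AddCommMonoid M] [Module R M]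

/-- The subspace of the vectors whose coordinates with index in `J` vanish. -/
noncomputable def coordinateSubspace (b : Module.Basis ι R M) (J : Set ι) : Submodule R M :=
  ⨅ j ∈ J, (b.coord j).ker

theorem mem_coordinateSubspace {b : Module.Basis ι R M} {J : Set ι} {x : M} :
    x ∈ coordinateSubspace b J ↔ ∀ j ∈ J, b.repr x j = 0 := by
  simp [coordinateSubspace]

theorem posSemidef_of_bilin {V : Type*} [Finite ι] [AddCommGroup V] [Module ℝ V]
    {B : V →ₗ[ℝ] V →ₗ[ℝ] ℝ} (hsymm : ∀ v w, B v w = B w v) (hnonneg : ∀ v, 0 ≤ B v v)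
    (e : ι → V) : (Matrix.of fun i j ↦ B (e i) (e j)).PosSemidef := by
  have := Fintype.ofFinite ι
  refine .of_dotProduct_mulVec_nonneg (Matrix.ext fun i j ↦ hsymm _ _) fun v ↦ ?_
  calc
    0 ≤ B (∑ i, v i • e i) (∑ j, v j • e j) := hnonneg _
    _ = star v ⬝ᵥ (Matrix.of fun i j ↦ B (e i) (e j)).mulVec v := by
      simp [dotProduct, Matrix.mulVec, mul_comm, hsymm]

end Coordinates

section Christoffel

variable {ι E : Type*} [Fintype ι] [NormedAddCommGroup E] [NormedSpace ℝ E]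
  [FiniteDimensional ℝ E] (b : Module.Basis ι ℝ E)

/-- The bilinear map with Christoffel symbols `Γ k i j` in the basis `b`, which sends `b i, b j` to
`∑ k, Γ k i j • b k`. It is bundled as a linear map of the symbols, so that it inherits their
regularity. -/
noncomputable def christoffelMap : (ι → ι → ι → ℝ) →ₗ[ℝ] E →L[ℝ] E →L[ℝ] E where
  toFun Γ := ∑ k, ∑ i, ∑ j, Γ k i j • (b.coord i).toContinuousLinearMap.smulRight
    ((b.coord j).toContinuousLinearMap.smulRight (b k))
  map_add' Γ Γ' := by
    ext v w
    simp [sum_apply, add_smul, Finset.sum_add_distrib]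
  map_smul' c Γ := by
    ext v w
    simp [sum_apply, mul_smul, Finset.smul_sum]

theorem christoffelMap_apply_apply (Γ : ι → ι → ι → ℝ) (v w : E) :
    christoffelMap b Γ v w = ∑ k, (∑ i, ∑ j, Γ k i j * (b.repr v i * b.repr w j)) • b k := by
  simp [christoffelMap, sum_apply, Finset.sum_smul, mul_smul]

theorem christoffelMap_basis_basis (Γ : ι → ι → ι → ℝ) (i j : ι) :
    christoffelMap b Γ (b i) (b j) = ∑ k, Γ k i j • b k := by
  classical
  simp [christoffelMap_apply_apply, Finsupp.single_apply]

theorem christoffelMap_comm {Γ : ι → ι → ι → ℝ} (hΓ : ∀ k i j, Γ k i j = Γ k j i) (v w : E) :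
    christoffelMap b Γ v w = christoffelMap b Γ w v := by
  rw [christoffelMap_apply_apply, christoffelMap_apply_apply]
  refine Finset.sum_congr rfl fun k _ ↦ ?_
  rw [Finset.sum_comm]
  simp only [hΓ k, mul_comm]

variable {b} in
theorem christoffelMap_mem_coordinateSubspace {J : Set ι} {Γ : ι → ι → ι → ℝ}
    (hΓ : ∀ k ∈ J, ∀ i ∉ J, ∀ j ∉ J, Γ k i j = 0) {v w : E}
    (hv : v ∈ coordinateSubspace b J) (hw : w ∈ coordinateSubspace b J) :
    christoffelMap b Γ v w ∈ coordinateSubspace b J := by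
  rw [mem_coordinateSubspace] at hv hw ⊢
  intro k hk
  rw [christoffelMap_apply_apply, b.repr_sum_self]
  refine Finset.sum_eq_zero fun i _ ↦ Finset.sum_eq_zero fun j _ ↦ ?_
  by_cases hi : i ∈ J
  · rw [hv i hi, zero_mul, mul_zero]
  by_cases hj : j ∈ J
  · rw [hw j hj, mul_zero, mul_zero]
  rw [hΓ k hk i hi j hj, zero_mul]

theorem norm_christoffelMap_le (Γ : ι → ι → ι → ℝ) :
    ‖christoffelMap b Γ‖ ≤ (∑ k, ∑ i, ∑ j, ‖(b.coord i).toContinuousLinearMap‖ *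
      ‖(b.coord j).toContinuousLinearMap‖ * ‖b k‖) * ‖Γ‖ := by
  refine ContinuousLinearMap.opNorm_le_bound₂ _ (by positivity) fun v w ↦ ?_
  have hΓ (k i j) : ‖Γ k i j‖ ≤ ‖Γ‖ :=
    (norm_le_pi_norm _ j).trans <| (norm_le_pi_norm _ i).trans <| norm_le_pi_norm Γ k
  have hcoord (i v) : ‖b.repr v i‖ ≤ ‖(b.coord i).toContinuousLinearMap‖ * ‖v‖ :=
    (b.coord i).toContinuousLinearMap.le_opNorm v
  rw [christoffelMap_apply_apply]
  simp only [Finset.sum_smul, Finset.sum_mul]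
  refine norm_sum_le_of_le _ fun k _ ↦ norm_sum_le_of_le _ fun i _ ↦
    norm_sum_le_of_le _ fun j _ ↦ ?_
  calc
    ‖(Γ k i j * (b.repr v i * b.repr w j)) • b k‖ =
        ‖Γ k i j‖ * (‖b.repr v i‖ * ‖b.repr w j‖) * ‖b k‖ := by
      rw [norm_smul, norm_mul, norm_mul]
    _ ≤ ‖Γ‖ * ((‖(b.coord i).toContinuousLinearMap‖ * ‖v‖) *
        (‖(b.coord j).toContinuousLinearMap‖ * ‖w‖)) * ‖b k‖ := by
      gcongr
      exacts [hΓ k i j, hcoord i v, hcoord j w]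
    _ = _ := by ring

theorem locallyLipschitzOn_christoffelMap {α : Type*} [PseudoEMetricSpace α] {s : Set α}
    {Γ : ι → ι → ι → α → ℝ} (hΓ : ∀ k i j, LocallyLipschitzOn s (Γ k i j)) :
    LocallyLipschitzOn s fun p ↦ christoffelMap b fun k i j ↦ Γ k i j p :=
  locallyLipschitzOn_comp_of_lipschitzWith
    (AddMonoidHomClass.lipschitz_of_bound (christoffelMap b) _ (norm_christoffelMap_le b)) <|
    locallyLipschitzOn_pi fun k ↦ locallyLipschitzOn_pi fun i ↦ locallyLipschitzOn_pi (hΓ k i)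

theorem connectionHessian_christoffelMap_basis_basis (f : E → ℝ) (Γ : ι → ι → ι → ℝ) (x : E)
    (i j : ι) :
    connectionHessian f (christoffelMap b Γ) x (b i) (b j) =
      iteratedFDeriv ℝ 2 f x ![b i, b j] - ∑ k, Γ k i j * fderiv ℝ f x (b k) := by
  simp [connectionHessian_apply, christoffelMap_basis_basis, iteratedFDeriv_two_apply]

end Christoffel

theorem exists_convex_function_of_totally_geodesic_general {ι P : Type*} [Fintype ι]
    [DecidableEq ι] [PseudoMetricSpace P] {S : Set P} (hS : IsCompact S) (J : Set ι)
    (Γ : ι → ι → ι → P × EuclideanSpace ℝ ι → ℝ)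
    (hΓ : ∀ k i j, LocallyLipschitzOn (S ×ˢ univ) (Γ k i j))
    (hΓsymm : ∀ k i j, Γ k i j = Γ k j i)
    (hΓ0 : ∀ k ∈ J, ∀ i ∉ J, ∀ j ∉ J, ∀ s ∈ S, ∀ x : EuclideanSpace ℝ ι,
      (∀ l ∈ J, x l = 0) → Γ k i j (s, x) = 0) :
    ∃ (V : Set (EuclideanSpace ℝ ι)) (f : EuclideanSpace ℝ ι → ℝ),
      IsOpen V ∧ 0 ∈ V ∧ ContDiff ℝ (⊤ : ℕ∞) f ∧ (∀ x, 0 ≤ f x) ∧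
      (∀ x ∈ V, (f x = 0 ↔ ∀ i ∈ J, x i = 0)) ∧
      ∀ s ∈ S, ∀ x ∈ V, (Matrix.of fun i j ↦
        iteratedFDeriv ℝ 2 f x ![EuclideanSpace.single i 1, EuclideanSpace.single j 1] -
          ∑ k, Γ k i j (s, x) * fderiv ℝ f x (EuclideanSpace.single k 1)).PosSemidef := by
  set b := (EuclideanSpace.basisFun ι ℝ).toBasis with hb
  have hb_apply (i : ι) : EuclideanSpace.single i 1 = b i := by simp [hb]
  have hmem {x : EuclideanSpace ℝ ι} : x ∈ coordinateSubspace b J ↔ ∀ i ∈ J, x i = 0 := by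
    simp [mem_coordinateSubspace, hb]
  obtain ⟨ε, hε, hnonneg⟩ := exists_connectionHessian_self_nonneg hS
    (locallyLipschitzOn_christoffelMap b hΓ) fun s hs x hx u hu ↦
      christoffelMap_mem_coordinateSubspace
        (fun k hk i hi j hj ↦ hΓ0 k hk i hi j hj s hs x (hmem.mp hx)) hu hu
  refine ⟨Metric.ball 0 (ε / 16), weightedSqDist (coordinateSubspace b J) ε, Metric.isOpen_ball,
    Metric.mem_ball_self (by positivity), contDiff_weightedSqDist _ _, weightedSqDist_nonneg _ _,
    fun x _ ↦ (weightedSqDist_eq_zero_iff _ hε.ne').trans hmem, fun s hs x hx ↦ ?_⟩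
  simp_rw [hb_apply, ← connectionHessian_christoffelMap_basis_basis b _ fun k i j ↦ Γ k i j (s, x)]
  have hsymm := connectionHessian_comm (x := x) (n := 2)
    (contDiff_weightedSqDist (coordinateSubspace b J) ε).contDiffAt le_rfl
    (christoffelMap_comm b fun k i j ↦ congrFun (hΓsymm k i j) (s, x))
  exact posSemidef_of_bilin (B := (connectionHessian _ _ x).toLinearMap₁₂) hsymm
    (hnonneg s hs x hx) b

/-- Coordinate form of Proposition 7.1: given `C¹` Christoffel symbols `Γ k i j` on
`ℝ × ℝᵈ`, symmetric in `i, j`, which vanish on `[0,T] × {x̂ = 0}` for `i, j < d₀ ≤ k`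
(total geodesy of `M₀ = {x̂ = 0}`), there are an open neighbourhood `V` of the origin and a
smooth nonnegative function `f` vanishing on `V` exactly on `{x̂ = 0}` whose `∇(s)`-Hessian
matrix `H(s,x)ᵢⱼ = ∂²f/∂xᵢ∂xⱼ (x) − Σₖ Γᵏᵢⱼ(s,x) ∂f/∂xₖ (x)` is positive semidefinite for
all `s ∈ [0,T]` and `x ∈ V`. -/
theorem exists_convex_function_of_totally_geodesic
    (d₀ d : ℕ) (hd : d₀ < d) (T : ℝ) (hT : 0 ≤ T)
    (Γ : Fin d → Fin d → Fin d → ℝ × EuclideanSpace ℝ (Fin d) → ℝ)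
    (hΓreg : ∀ k i j, ContDiff ℝ 1 (Γ k i j))
    (hΓsymm : ∀ k i j, Γ k i j = Γ k j i)
    (hΓ0 : ∀ (k i j : Fin d), (i : ℕ) < d₀ → (j : ℕ) < d₀ → d₀ ≤ (k : ℕ) →
      ∀ s ∈ Set.Icc (0 : ℝ) T, ∀ x : EuclideanSpace ℝ (Fin d),
        (∀ l : Fin d, d₀ ≤ (l : ℕ) → x l = 0) → Γ k i j (s, x) = 0) :
    ∃ (V : Set (EuclideanSpace ℝ (Fin d))) (f : EuclideanSpace ℝ (Fin d) → ℝ),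
      IsOpen V ∧ (0 : EuclideanSpace ℝ (Fin d)) ∈ V ∧
      ContDiff ℝ (⊤ : ℕ∞) f ∧ (∀ x, 0 ≤ f x) ∧
      (∀ x ∈ V, (f x = 0 ↔ ∀ i : Fin d, d₀ ≤ (i : ℕ) → x i = 0)) ∧
      (∀ s ∈ Set.Icc (0 : ℝ) T, ∀ x ∈ V,
        (Matrix.of fun i j : Fin d =>
          iteratedFDeriv ℝ 2 f x ![EuclideanSpace.single i (1 : ℝ),
              EuclideanSpace.single j (1 : ℝ)]
            - ∑ k : Fin d, Γ k i j (s, x) *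
                fderiv ℝ f x (EuclideanSpace.single k (1 : ℝ))).PosSemidef) := by
  exact exists_convex_function_of_totally_geodesic_general isCompact_Icc
    {i : Fin d | d₀ ≤ (i : ℕ)} Γ
    (fun k i j ↦ (hΓreg k i j).locallyLipschitz.locallyLipschitzOn) hΓsymm
    fun k hk i hi j hj ↦ hΓ0 k i j (not_le.mp hi) (not_le.mp hj) hk
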